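/- Let R be a henselian Gorenstein Noetherian local ring and 𝒳 a resolving subcategory of the category of finitely generated R-modules. Then 𝒳 is coherent if and only if rap 𝒳 is closed under kernels of surjections, i.e. for every short exact sequence 0 → A → B → C → 0 of finitely generated R-modules with B and C admitting right 𝒳-approximations, A also admits a right 𝒳-approximation. -/

import Mathlib

open CategoryTheory IsLocalRing

universe u

noncomputable section

/-- The `i`-th Ext module of two `R`-modules. -/
abbrev ExtMod (R : Type u) [CommRing R] (i : ℕ) (M N : ModuleCat.{u} R) : ModuleCat R :=
  ((Ext R (ModuleCat.{u} R) i).obj (Opposite.op M)).obj N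

/-- Vanishing of the `i`-th Ext module: `Ext_R^i(M, N) = 0`. -/
def ExtVanish (R : Type u) [CommRing R] (i : ℕ) (M N : ModuleCat.{u} R) : Prop :=
  Subsingleton (ExtMod R i M N)

variable (R : Type u) [CommRing R]

/-- `0 → A → B → C → 0` is a short exact sequence. -/
def IsSES {A B C : ModuleCat.{u} R} (f : A →ₗ[R] B) (g : B →ₗ[R] C) : Prop :=
  Function.Injective f ∧ Function.Exact f g ∧ Function.Surjective g

/-- A resolving subcategory of the category of finitely generated `R`-modules. -/
structure IsResolving (𝒳 : Set (ModuleCat.{u} R)) : Prop where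
  finite : ∀ M ∈ 𝒳, Module.Finite R M
  isoClosed : ∀ {M N : ModuleCat.{u} R}, M ∈ 𝒳 → (↥M ≃ₗ[R] ↥N) → N ∈ 𝒳
  freeMem : ∀ M : ModuleCat.{u} R, Module.Finite R M → Module.Free R M → M ∈ 𝒳
  summandClosed : ∀ M N : ModuleCat.{u} R, ModuleCat.of R (↥M × ↥N) ∈ 𝒳 → M ∈ 𝒳
  extClosed : ∀ (A B C : ModuleCat.{u} R) (f : A →ₗ[R] B) (g : B →ₗ[R] C),
    IsSES R f g → A ∈ 𝒳 → C ∈ 𝒳 → B ∈ 𝒳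
  kerClosed : ∀ (A B C : ModuleCat.{u} R) (f : A →ₗ[R] B) (g : B →ₗ[R] C),
    IsSES R f g → B ∈ 𝒳 → C ∈ 𝒳 → A ∈ 𝒳

/-- `f : X → M` is a right `𝒳`-approximation of `M`. -/
def IsRightApprox (𝒳 : Set (ModuleCat.{u} R)) {X M : ModuleCat.{u} R} (f : X →ₗ[R] M) : Prop :=
  X ∈ 𝒳 ∧ ∀ W ∈ 𝒳, ∀ g : ↥W →ₗ[R] ↥M, ∃ h : ↥W →ₗ[R] ↥X, f ∘ₗ h = g

/-- `M` admits a right `𝒳`-approximation. -/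
def HasRightApprox (𝒳 : Set (ModuleCat.{u} R)) (M : ModuleCat.{u} R) : Prop :=
  ∃ (X : ModuleCat.{u} R) (f : X →ₗ[R] M), IsRightApprox R 𝒳 f

/-- `𝒳` is contravariantly infinite: no finitely generated module outside `𝒳` admits
a right `𝒳`-approximation. -/
def ContravariantlyInfinite (𝒳 : Set (ModuleCat.{u} R)) : Prop :=
  ∀ M : ModuleCat.{u} R, Module.Finite R M → M ∉ 𝒳 → ¬ HasRightApprox R 𝒳 M

/-- `𝒳` is contravariantly finite: every finitely generated module admits
a right `𝒳`-approximation. -/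
def ContravariantlyFinite (𝒳 : Set (ModuleCat.{u} R)) : Prop :=
  ∀ M : ModuleCat.{u} R, Module.Finite R M → HasRightApprox R 𝒳 M

/-- The restricted functor `Hom_R(-, C)|_𝒳` is finitely presented, i.e. `C ∈ 𝒞(𝒳)`. -/
def MemCC (𝒳 : Set (ModuleCat.{u} R)) (C : ModuleCat.{u} R) : Prop :=
  ∃ (X₀ X₁ : ModuleCat.{u} R) (g : ↥X₁ →ₗ[R] ↥X₀) (f : ↥X₀ →ₗ[R] ↥C), X₀ ∈ 𝒳 ∧ X₁ ∈ 𝒳 ∧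
    ∀ W ∈ 𝒳, Function.Surjective (fun h : ↥W →ₗ[R] ↥X₀ => f ∘ₗ h) ∧
      Function.Exact (fun h : ↥W →ₗ[R] ↥X₁ => g ∘ₗ h) (fun h : ↥W →ₗ[R] ↥X₀ => f ∘ₗ h)

/-- `𝒳` is coherent: `𝒞(𝒳) = rap 𝒳`. -/
def Coherent (𝒳 : Set (ModuleCat.{u} R)) : Prop :=
  ∀ M : ModuleCat.{u} R, Module.Finite R M → (MemCC R 𝒳 M ↔ HasRightApprox R 𝒳 M)

/-- The right Ext-orthogonal class `𝒳^⊥` of a class `𝒳` of finitely generated modules. -/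
def XPerp (𝒳 : Set (ModuleCat.{u} R)) : Set (ModuleCat.{u} R) :=
  {Y | Module.Finite R Y ∧ ∀ X ∈ 𝒳, ∀ i, 0 < i → ExtVanish R i X Y}

/-- The projective dimension of `M` is at most `n`. -/
def ProjDimLE (M : ModuleCat.{u} R) (n : ℕ) : Prop :=
  ∀ N : ModuleCat.{u} R, ∀ i, n < i → ExtVanish R i M N

/-- The depth of an `R`-module over a local ring: `inf { i | Ext^i(k, M) ≠ 0 }`. -/
def moduleDepth [IsLocalRing R] (M : ModuleCat.{u} R) : ℕ∞ :=
  sInf ((fun i : ℕ => (i : ℕ∞)) ''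
    {i : ℕ | ¬ ExtVanish R i (ModuleCat.of R (ResidueField R)) M})

/-- `M` is a maximal Cohen–Macaulay `R`-module: `depth M ≥ dim R`. -/
def IsMCM [IsLocalRing R] (M : ModuleCat.{u} R) : Prop :=
  ringKrullDim R ≤ (moduleDepth R M : WithBot ℕ∞)

/-- A Gorenstein local ring: `∃ n, Ext^i(M, R) = 0` for every finitely generated `M`
and every `i > n`. -/
def IsGorensteinLocalRing : Prop :=
  ∃ n : ℕ, ∀ M : ModuleCat.{u} R, Module.Finite R M →
    ∀ i, n < i → ExtVanish R i M (ModuleCat.of R R)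

/-- A regular local ring: Noetherian local with `dim R = dim_k 𝔪/𝔪²`. -/
def IsRegularLocal [IsLocalRing R] : Prop :=
  IsNoetherianRing R ∧
    ringKrullDim R = (Module.finrank (ResidueField R) (CotangentSpace R) : ℕ)

/-- Witness that the local ring `R` is a complete intersection: its `𝔪`-adic completion
is `Q/(f₁, …, f_c)` for a regular local ring `Q` and a `Q`-regular sequence `f₁, …, f_c`. -/
structure CompleteIntersectionWitness [IsLocalRing R] : Type (u + 1) where
  Q : Type u
  [commRing : CommRing Q]
  [localRing : IsLocalRing Q]
  regular : IsRegularLocal Q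
  fs : List Q
  regSeq : RingTheory.Sequence.IsRegular Q fs
  equiv : AdicCompletion (maximalIdeal R) R ≃+* Q ⧸ Ideal.span {x : Q | x ∈ fs}

/-- The local ring `R` is a complete intersection. -/
def IsCompleteIntersection [IsLocalRing R] : Prop :=
  Nonempty (CompleteIntersectionWitness R)

end

/-! Let `0 → A → B → C → 0` be exact, `f₀ : X₀ → C` a right `𝒳`-approximation whose kernel has one,
and `b : X → B` a right `𝒳`-approximation. Since `X ∈ 𝒳`, the composite `X → B → C` lifts along `f₀`
to `h : X → X₀`, so the pullback of `X` and `X₀` over `C` splits as `ker f₀ × X` and admits an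
approximation. Hence so does `L = ker (X → C)`, the kernel of the pullback's surjection onto `X₀`,
by closure of `𝒳` under such kernels, and then so does `A`, because every map from `𝒳` to `A`
factors through `L → A`. Conversely, the kernel of an approximation `X → M` is the kernel of a
surjection within `rap 𝒳`, so `M ∈ 𝒞(𝒳)`. -/

section

variable {R : Type u} [CommRing R] {𝒳 : Set (ModuleCat.{u} R)}

theorem isSES_subtype_ker {M N : ModuleCat.{u} R} {f : M →ₗ[R] N} (hf : Function.Surjective f) :
    IsSES R (A := ModuleCat.of R (LinearMap.ker f)) (LinearMap.ker f).subtype f :=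
  ⟨Submodule.injective_subtype _, LinearMap.exact_subtype_ker_map f, hf⟩

namespace IsResolving

theorem ker_mem (h𝒳 : IsResolving R 𝒳) {X Y : ModuleCat.{u} R} (hX : X ∈ 𝒳) (hY : Y ∈ 𝒳)
    {f : X →ₗ[R] Y} (hf : Function.Surjective f) : ModuleCat.of R (LinearMap.ker f) ∈ 𝒳 :=
  h𝒳.kerClosed _ X Y _ f (isSES_subtype_ker hf) hX hY

theorem prod_mem (h𝒳 : IsResolving R 𝒳) {X Y : ModuleCat.{u} R} (hX : X ∈ 𝒳) (hY : Y ∈ 𝒳) :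
    ModuleCat.of R (X × Y) ∈ 𝒳 :=
  h𝒳.extClosed X (ModuleCat.of R (X × Y)) Y (LinearMap.inl R X Y) (LinearMap.snd R X Y)
    ⟨LinearMap.inl_injective, Function.Exact.inl_snd, LinearMap.snd_surjective⟩ hX hY

end IsResolving

theorem IsRightApprox.surjective (h𝒳 : IsResolving R 𝒳) {X M : ModuleCat.{u} R}
    {f : X →ₗ[R] M} (hf : IsRightApprox R 𝒳 f) : Function.Surjective f := by
  intro m
  have hR : ModuleCat.of R R ∈ 𝒳 :=
    h𝒳.freeMem _ (inferInstanceAs (Module.Finite R R)) (inferInstanceAs (Module.Free R R))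
  obtain ⟨s, hs⟩ := hf.2 _ hR (LinearMap.toSpanSingleton R M m)
  exact ⟨s (1 : R), (LinearMap.congr_fun hs (1 : R)).trans (LinearMap.toSpanSingleton_apply_one ..)⟩

theorem IsRightApprox.prodMap (h𝒳 : IsResolving R 𝒳) {X Y M N : ModuleCat.{u} R}
    {f : X →ₗ[R] M} {g : Y →ₗ[R] N} (hf : IsRightApprox R 𝒳 f) (hg : IsRightApprox R 𝒳 g) :
    IsRightApprox R 𝒳 (X := ModuleCat.of R (X × Y)) (M := ModuleCat.of R (M × N))
      (f.prodMap g) := by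
  refine ⟨h𝒳.prod_mem hf.1 hg.1, fun W hW w ↦ ?_⟩
  obtain ⟨s, hs⟩ := hf.2 W hW (LinearMap.fst R M N ∘ₗ w)
  obtain ⟨t, ht⟩ := hg.2 W hW (LinearMap.snd R M N ∘ₗ w)
  exact ⟨s.prod t, LinearMap.ext fun x ↦
    Prod.ext (LinearMap.congr_fun hs x) (LinearMap.congr_fun ht x)⟩

namespace HasRightApprox

theorem of_mem {X : ModuleCat.{u} R} (hX : X ∈ 𝒳) : HasRightApprox R 𝒳 X :=
  ⟨X, LinearMap.id, hX, fun _ _ w ↦ ⟨w, rfl⟩⟩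

theorem prod (h𝒳 : IsResolving R 𝒳) {M N : ModuleCat.{u} R} (hM : HasRightApprox R 𝒳 M)
    (hN : HasRightApprox R 𝒳 N) : HasRightApprox R 𝒳 (ModuleCat.of R (M × N)) := by
  obtain ⟨X, f, hf⟩ := hM
  obtain ⟨Y, g, hg⟩ := hN
  exact ⟨_, _, hf.prodMap h𝒳 hg⟩

theorem of_forall_exists_comp_eq {L A : ModuleCat.{u} R} (hL : HasRightApprox R 𝒳 L)
    (q : L →ₗ[R] A) (hq : ∀ W ∈ 𝒳, ∀ w : W →ₗ[R] A, ∃ s : W →ₗ[R] L, q ∘ₗ s = w) :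
    HasRightApprox R 𝒳 A := by
  obtain ⟨X, f, hX, hf⟩ := hL
  refine ⟨X, q ∘ₗ f, hX, fun W hW w ↦ ?_⟩
  obtain ⟨s, rfl⟩ := hq W hW w
  obtain ⟨t, rfl⟩ := hf W hW s
  exact ⟨t, rfl⟩

theorem ker_of_mem (h𝒳 : IsResolving R 𝒳) {P Y : ModuleCat.{u} R} (hP : HasRightApprox R 𝒳 P)
    (hY : Y ∈ 𝒳) {m : P →ₗ[R] Y} (hm : Function.Surjective m) :
    HasRightApprox R 𝒳 (ModuleCat.of R (LinearMap.ker m)) := by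
  obtain ⟨Q, d, hd⟩ := hP
  refine ⟨ModuleCat.of R (LinearMap.ker (m ∘ₗ d)),
    d.restrict (p := LinearMap.ker (m ∘ₗ d)) (q := LinearMap.ker m) fun _ hx ↦ hx,
    h𝒳.ker_mem hd.1 hY (hm.comp (hd.surjective h𝒳)), fun W hW w ↦ ?_⟩
  obtain ⟨s, hs⟩ := hd.2 W hW ((LinearMap.ker m).subtype ∘ₗ w)
  have hs_apply (x : W) : d (s x) = (w x).1 := LinearMap.congr_fun hs x
  exact ⟨s.codRestrict (LinearMap.ker (m ∘ₗ d)) fun x ↦ (congrArg m (hs_apply x)).trans (w x).2,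
    LinearMap.ext fun x ↦ Subtype.ext (hs_apply x)⟩

end HasRightApprox

theorem memCC_iff_exists_hasRightApprox_ker {C : ModuleCat.{u} R} :
    MemCC R 𝒳 C ↔ ∃ (X : ModuleCat.{u} R) (f : X →ₗ[R] C), IsRightApprox R 𝒳 f ∧
      HasRightApprox R 𝒳 (ModuleCat.of R (LinearMap.ker f)) := by
  constructor
  · rintro ⟨X₀, X₁, g, f, hX₀, hX₁, h⟩
    have hfg : f ∘ₗ g = 0 := ((h X₁ hX₁).2 g).mpr ⟨LinearMap.id, rfl⟩
    refine ⟨X₀, f, ⟨hX₀, fun W hW ↦ (h W hW).1⟩, X₁,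
      g.codRestrict (LinearMap.ker f) (LinearMap.congr_fun hfg), hX₁, fun W hW w ↦ ?_⟩
    have hw : f ∘ₗ (LinearMap.ker f).subtype ∘ₗ w = 0 := LinearMap.ext fun x ↦ (w x).2
    obtain ⟨t, ht⟩ := ((h W hW).2 _).mp hw
    exact ⟨t, LinearMap.ext fun x ↦ Subtype.ext (LinearMap.congr_fun ht x)⟩
  · rintro ⟨X₀, f, hf, X₁, k, hX₁, hk⟩
    refine ⟨X₀, X₁, (LinearMap.ker f).subtype ∘ₗ k, f, hf.1, hX₁, fun W hW ↦
      ⟨hf.2 W hW, fun w ↦ ⟨fun hw ↦ ?_, ?_⟩⟩⟩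
    · obtain ⟨t, ht⟩ := hk W hW (w.codRestrict (LinearMap.ker f) (LinearMap.congr_fun hw))
      exact ⟨t, LinearMap.ext fun x ↦ congrArg Subtype.val (LinearMap.congr_fun ht x)⟩
    · rintro ⟨t, rfl⟩
      exact LinearMap.ext fun x ↦ (k (t x)).2

theorem HasRightApprox.ker_of_memCC (h𝒳 : IsResolving R 𝒳) {X C : ModuleCat.{u} R} (hX : X ∈ 𝒳)
    (hC : MemCC R 𝒳 C) {g : X →ₗ[R] C} (hg : Function.Surjective g) :
    HasRightApprox R 𝒳 (ModuleCat.of R (LinearMap.ker g)) := by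
  obtain ⟨X₀, f₀, hf₀, hK⟩ := memCC_iff_exists_hasRightApprox_ker.mp hC
  obtain ⟨h, rfl⟩ := hf₀.2 X hX g
  -- The pullback of `g = f₀ ∘ h` and `f₀` is `ker f₀ × X`, and `m` is its projection to `X₀`.
  let m : LinearMap.ker f₀ × X →ₗ[R] X₀ := (LinearMap.ker f₀).subtype.coprod h
  have hm : Function.Surjective m := fun y ↦ by
    obtain ⟨x, hx⟩ := hg (f₀ y)
    exact ⟨(⟨y - h x, LinearMap.sub_mem_ker_iff.mpr hx.symm⟩, x), sub_add_cancel y (h x)⟩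
  have hL : HasRightApprox R 𝒳 (ModuleCat.of R (LinearMap.ker m)) :=
    (hK.prod h𝒳 (.of_mem hX)).ker_of_mem h𝒳 hf₀.1 hm
  have hsnd (z : LinearMap.ker f₀ × X) (hz : z ∈ LinearMap.ker m) :
      z.2 ∈ LinearMap.ker (f₀ ∘ₗ h) := by
    have hfz : f₀ (z.1 + h z.2) = 0 := (congrArg f₀ hz).trans (map_zero f₀)
    rwa [map_add, z.1.2, zero_add] at hfz
  refine hL.of_forall_exists_comp_eq ((LinearMap.snd R _ X).restrict hsnd) fun W _ w ↦ ?_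
  let n : W →ₗ[R] LinearMap.ker f₀ := -(h.restrict fun _ hx ↦ hx) ∘ₗ w
  exact ⟨(n.prod ((LinearMap.ker (f₀ ∘ₗ h)).subtype ∘ₗ w)).codRestrict (LinearMap.ker m)
    fun x ↦ neg_add_cancel (h (w x).1), rfl⟩

theorem HasRightApprox.of_isSES_of_memCC (h𝒳 : IsResolving R 𝒳) {A B C : ModuleCat.{u} R}
    {f : A →ₗ[R] B} {g : B →ₗ[R] C} (hfg : IsSES R f g) (hB : HasRightApprox R 𝒳 B)
    (hC : MemCC R 𝒳 C) : HasRightApprox R 𝒳 A := by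
  obtain ⟨hf, hex, hg⟩ := hfg
  obtain ⟨X, b, hb⟩ := hB
  have hL : HasRightApprox R 𝒳 (ModuleCat.of R (LinearMap.ker (g ∘ₗ b))) :=
    .ker_of_memCC h𝒳 hb.1 hC (hg.comp (hb.surjective h𝒳))
  let q : LinearMap.ker (g ∘ₗ b) →ₗ[R] A :=
    (b ∘ₗ (LinearMap.ker (g ∘ₗ b)).subtype).codRestrictOfInjective f hf fun z ↦ (hex _).mp z.2
  have hq (z : LinearMap.ker (g ∘ₗ b)) : f (q z) = b z :=
    LinearMap.codRestrictOfInjective_comp_apply ..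
  refine hL.of_forall_exists_comp_eq q fun W hW w ↦ ?_
  obtain ⟨s, hs⟩ := hb.2 W hW (f ∘ₗ w)
  have hs_apply (x : W) : b (s x) = f (w x) := LinearMap.congr_fun hs x
  have hs_ker (x : W) : s x ∈ LinearMap.ker (g ∘ₗ b) :=
    (congrArg g (hs_apply x)).trans (hex.apply_apply_eq_zero _)
  exact ⟨s.codRestrict _ hs_ker, LinearMap.ext fun x ↦ hf ((hq _).trans (hs_apply x))⟩

end

theorem stmt13_general (R : Type u) [CommRing R] [IsNoetherianRing R]
    (𝒳 : Set (ModuleCat.{u} R)) (h𝒳 : IsResolving R 𝒳) :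
    Coherent R 𝒳 ↔
      ∀ (A B C : ModuleCat.{u} R), Module.Finite R A → Module.Finite R B →
        Module.Finite R C → ∀ (f : ↥A →ₗ[R] ↥B) (g : ↥B →ₗ[R] ↥C), IsSES R f g →
          HasRightApprox R 𝒳 B → HasRightApprox R 𝒳 C → HasRightApprox R 𝒳 A := by
  constructor
  · intro hcoh A B C _ _ hC f g hfg hB hC'
    exact hB.of_isSES_of_memCC h𝒳 hfg ((hcoh C hC).mpr hC')
  · refine fun hker M hM ↦ memCC_iff_exists_hasRightApprox_ker.trans
      ⟨fun ⟨X, f, hf, _⟩ ↦ ⟨X, f, hf⟩, fun ⟨X, f, hf⟩ ↦ ⟨X, f, hf, ?_⟩⟩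
    have hX : Module.Finite R X := h𝒳.finite X hf.1
    exact hker _ X M (inferInstanceAs (Module.Finite R (LinearMap.ker f))) hX hM _ f
      (isSES_subtype_ker (hf.surjective h𝒳)) (.of_mem hf.1) ⟨X, f, hf⟩

/-- Over a henselian Gorenstein local ring, a resolving subcategory `𝒳`
is coherent iff `rap 𝒳` is closed under kernels of surjections. -/
theorem stmt13 (R : Type u) [CommRing R] [IsNoetherianRing R] [IsLocalRing R]
    [HenselianLocalRing R] (hG : IsGorensteinLocalRing R)
    (𝒳 : Set (ModuleCat.{u} R)) (h𝒳 : IsResolving R 𝒳) :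
    Coherent R 𝒳 ↔
      ∀ (A B C : ModuleCat.{u} R), Module.Finite R A → Module.Finite R B →
        Module.Finite R C → ∀ (f : ↥A →ₗ[R] ↥B) (g : ↥B →ₗ[R] ↥C), IsSES R f g →
          HasRightApprox R 𝒳 B → HasRightApprox R 𝒳 C → HasRightApprox R 𝒳 A :=
  stmt13_general R 𝒳 h𝒳
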